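/- Let α > 0 and k > 2/α be real, let μ ∈ ℝ, θ₂ ≥ 0, a ≥ 0, and 0 < h ≤ Y be reals with a·h^{-α} < 1. Then ∫_h^Y y^{1-kα} (1 + a y^{-α})^{-(k+μ)} · ₁F₁(k+μ; μ; θ₂/(1 + a y^{-α})) dy = G(Y) - G(h), where G(y) = (y^{2-kα}/(2-kα)) · Ψ₁(k+μ, k - 2/α; μ, k - 2/α + 1; θ₂, -a y^{-α}). -/

import Mathlib

open MeasureTheory Real Nat Polynomial

/-- The confluent hypergeometric function `₁F₁(a; b; x)`, defined by its everywhere-convergent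
series `∑_j ((a)_j/(b)_j) x^j / j!`, where `(a)_j` is the ascending Pochhammer symbol. -/
noncomputable def hyp1F1 (a b x : ℝ) : ℝ :=
  ∑' j : ℕ, ((ascPochhammer ℝ j).eval a / (ascPochhammer ℝ j).eval b) * x ^ j / (j ! : ℝ)

/-- The Humbert series `Ψ₁(a, b; c, d; x, y)`, defined by the double series
`∑_j ∑_l ((a)_{j+l} (b)_l / ((c)_j (d)_l)) x^j y^l / (j! l!)`, convergent for arbitrary `x`
and `|y| < 1`. -/
noncomputable def humbertPsi1 (a b c d x y : ℝ) : ℝ :=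
  ∑' j : ℕ, ∑' l : ℕ,
    ((ascPochhammer ℝ (j + l)).eval a * (ascPochhammer ℝ l).eval b /
      ((ascPochhammer ℝ j).eval c * (ascPochhammer ℝ l).eval d)) *
      x ^ j * y ^ l / ((j ! : ℝ) * (l ! : ℝ))

/-!
The Pochhammer symbols satisfy `(d)_l (d + l) = d (d + 1)_l`, so integrating the series of
`y ^ (d β - 1) Ψ₁(a, b; c, d; x, w y ^ β)` term by term raises `d` to `d + 1` and produces the
factor `y ^ (d β) / (d β)`. On the other hand, the binomial series evaluates the inner sum of `Ψ₁`
when its parameters `b` and `d` coincide: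
`Ψ₁(a, b; c, b; x, y) = (1 - y) ^ (-a) ₁F₁(a; c; x / (1 - y))`.
The theorem is the case `β = -α`, `w = -a`, `b = d = k - 2 / α`.
-/

section Pochhammer

theorem ascPochhammer_eval_add {R : Type*} [CommSemiring R] (a : R) (j l : ℕ) :
    (ascPochhammer R (j + l)).eval a =
      (ascPochhammer R j).eval a * (ascPochhammer R l).eval (a + j) := by
  simp [← ascPochhammer_mul]

theorem ascPochhammer_eval_mul_add_natCast {R : Type*} [CommSemiring R] (d : R) (l : ℕ) :
    (ascPochhammer R l).eval d * (d + l) = d * (ascPochhammer R l).eval (d + 1) := by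
  rw [← ascPochhammer_succ_eval, ascPochhammer_succ_left]
  simp

theorem ascPochhammer_eval_ne_zero {R : Type*} [CommRing R] [IsDomain R] {b : R}
    (hb : ∀ l : ℕ, b + l ≠ 0) (n : ℕ) : (ascPochhammer R n).eval b ≠ 0 := by
  rw [Ne, ascPochhammer_eval_eq_zero_iff]
  rintro ⟨l, -, hl⟩
  exact hb l (by rw [hl, add_neg_cancel])

theorem abs_ascPochhammer_eval_le {R : Type*} [CommRing R] [LinearOrder R] [IsStrictOrderedRing R]
    (a : R) (n : ℕ) : |(ascPochhammer R n).eval a| ≤ (ascPochhammer R n).eval |a| := by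
  induction n with
  | zero => simp
  | succ n ih =>
    rw [ascPochhammer_succ_eval, ascPochhammer_succ_eval, abs_mul]
    have hfactor : |a + n| ≤ |a| + n := (abs_add_le _ _).trans_eq (by rw [Nat.abs_cast])
    exact mul_le_mul ih hfactor (abs_nonneg _) ((abs_nonneg _).trans ih)

theorem summable_ascPochhammer_div_mul_pow (b d : ℝ) {x : ℝ} (hx : |x| < 1) :
    Summable fun n : ℕ =>
      (ascPochhammer ℝ n).eval b / (ascPochhammer ℝ n).eval d * x ^ n := by
  obtain ⟨r, hxr, hr⟩ := exists_between hx
  have hratio : Filter.Tendsto (fun n : ℕ => |(b + n) / (d + n) * x|) Filter.atTop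
      (nhds |x|) := by
    have h := tendsto_add_mul_div_add_mul_atTop_nhds b d (1 : ℝ) (one_ne_zero (α := ℝ))
    simpa using (h.mul_const x).abs
  refine summable_of_ratio_norm_eventually_le hr ?_
  filter_upwards [hratio.eventually_le_const hxr] with n hn
  have hsucc : (ascPochhammer ℝ (n + 1)).eval b / (ascPochhammer ℝ (n + 1)).eval d * x ^ (n + 1) =
      (b + n) / (d + n) * x *
        ((ascPochhammer ℝ n).eval b / (ascPochhammer ℝ n).eval d * x ^ n) := by
    rw [ascPochhammer_succ_eval, ascPochhammer_succ_eval, mul_div_mul_comm, pow_succ]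
    ring
  rw [hsucc, norm_mul]
  exact mul_le_mul_of_nonneg_right hn (norm_nonneg _)

theorem exists_abs_ascPochhammer_div_mul_pow_le (b d : ℝ) {r q : ℝ} (hr : 0 ≤ r) (hrq : r < q) :
    ∃ C : ℝ, ∀ n : ℕ,
      |(ascPochhammer ℝ n).eval b / (ascPochhammer ℝ n).eval d| * r ^ n ≤ C * q ^ n := by
  have hq : 0 < q := hr.trans_lt hrq
  have hlt : |r / q| < 1 := by rwa [abs_of_nonneg (by positivity), div_lt_one hq]
  obtain ⟨C, hC⟩ :=
    (summable_ascPochhammer_div_mul_pow b d hlt).tendsto_atTop_zero.abs.bddAbove_range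
  refine ⟨C, fun n => ?_⟩
  have hn : |(ascPochhammer ℝ n).eval b / (ascPochhammer ℝ n).eval d * (r / q) ^ n| ≤ C :=
    hC ⟨n, rfl⟩
  rwa [abs_mul, abs_of_nonneg (a := (r / q) ^ n) (by positivity), div_pow, ← mul_div_assoc,
    div_le_iff₀ (by positivity)] at hn

theorem hasSum_ascPochhammer_div_factorial_mul_pow (a : ℝ) {x : ℝ} (hx : |x| < 1) :
    HasSum (fun l : ℕ => (ascPochhammer ℝ l).eval a / (l ! : ℝ) * x ^ l) ((1 - x) ^ (-a)) := by
  have hseries := (Real.one_div_one_sub_rpow_hasFPowerSeriesOnBall_zero a).hasSum (y := x)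
    (by simpa [enorm_eq_nnnorm, ← NNReal.coe_lt_coe] using hx)
  have hchoose (l : ℕ) : Ring.choose (a + l - 1) l = (ascPochhammer ℝ l).eval a / (l ! : ℝ) := by
    rw [eq_div_iff (by positivity), Ring.choose, ← ascPochhammer_smeval_eq_eval,
      ← Ring.factorial_nsmul_multichoose_eq_ascPochhammer, nsmul_eq_mul, mul_comm,
      show a + l - 1 - l + 1 = a by ring]
  rw [rpow_neg (by linarith [(abs_lt.1 hx).2])]
  simpa only [zero_add, one_div, FormalMultilinearSeries.ofScalars_apply_eq, smul_eq_mul,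
    hchoose] using hseries

theorem hasSum_ascPochhammer_add_div_factorial_mul_pow (a : ℝ) (j : ℕ) {x : ℝ} (hx : |x| < 1) :
    HasSum (fun l : ℕ => (ascPochhammer ℝ (j + l)).eval a / (l ! : ℝ) * x ^ l)
      ((ascPochhammer ℝ j).eval a * ((1 - x) ^ (-a) / (1 - x) ^ j)) := by
  have hpos : 0 < 1 - x := by linarith [(abs_lt.1 hx).2]
  have h := (hasSum_ascPochhammer_div_factorial_mul_pow (a + j) hx).mul_left
    ((ascPochhammer ℝ j).eval a)
  rw [neg_add', rpow_sub_natCast hpos.ne'] at h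
  simpa only [ascPochhammer_eval_add, mul_div_assoc, mul_assoc] using h

end Pochhammer

theorem summable_hyp1F1 (a b x : ℝ) : Summable fun j : ℕ =>
    ((ascPochhammer ℝ j).eval a / (ascPochhammer ℝ j).eval b) * x ^ j / (j ! : ℝ) := by
  obtain ⟨C, hC⟩ := exists_abs_ascPochhammer_div_mul_pow_le a b (abs_nonneg x) (lt_add_one |x|)
  refine ((Real.summable_pow_div_factorial (|x| + 1)).mul_left C).of_norm_bounded fun j => ?_
  rw [norm_div, norm_mul, norm_pow, Real.norm_natCast, ← mul_div_assoc]
  exact div_le_div_of_nonneg_right (hC j) (by positivity)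

theorem summable_abs_mul_ascPochhammer_add_mul_pow (c x : ℝ) {a y : ℝ} (ha : 0 ≤ a)
    (hy₀ : 0 ≤ y) (hy₁ : y < 1) :
    Summable fun p : ℕ × ℕ =>
      |x ^ p.1 / ((ascPochhammer ℝ p.1).eval c * (p.1 ! : ℝ))| *
        ((ascPochhammer ℝ (p.1 + p.2)).eval a / (p.2 ! : ℝ) * y ^ p.2) := by
  have hrow (j : ℕ) := (hasSum_ascPochhammer_add_div_factorial_mul_pow a j
    (abs_lt.2 ⟨by linarith, hy₁⟩)).mul_left |x ^ j / ((ascPochhammer ℝ j).eval c * (j ! : ℝ))|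
  have hpoch (n : ℕ) : 0 ≤ (ascPochhammer ℝ n).eval a := by
    simpa only [abs_of_nonneg ha] using (abs_nonneg _).trans (abs_ascPochhammer_eval_le a n)
  refine (summable_prod_of_nonneg fun p => mul_nonneg (abs_nonneg _)
    (mul_nonneg (div_nonneg (hpoch _) (by positivity)) (by positivity))).2
    ⟨fun j => (hrow j).summable, ?_⟩
  simp_rw [(hrow _).tsum_eq]
  refine ((summable_hyp1F1 a c (x / (1 - y))).abs.mul_left ((1 - y) ^ (-a))).congr fun j => ?_
  simp only [abs_div, abs_mul, abs_pow, Nat.abs_cast, abs_of_nonneg (hpoch j),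
    abs_of_pos (sub_pos.2 hy₁), div_pow]
  ring

section Humbert

variable (a b c d x : ℝ)

/-- The coefficient of `y ^ l` in the term of index `p = (j, l)` of `Ψ₁(a, b; c, d; x, y)`. Leaving
out the power of `y` presents `Ψ₁` as a power series in `y` indexed by `ℕ × ℕ`, which is the form
integrated term by term. -/
noncomputable def humbertPsi1Coeff (p : ℕ × ℕ) : ℝ :=
  ((ascPochhammer ℝ (p.1 + p.2)).eval a * (ascPochhammer ℝ p.2).eval b /
    ((ascPochhammer ℝ p.1).eval c * (ascPochhammer ℝ p.2).eval d)) *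
    x ^ p.1 / ((p.1 ! : ℝ) * (p.2 ! : ℝ))

theorem humbertPsi1Coeff_div_add_natCast (p : ℕ × ℕ) :
    humbertPsi1Coeff a b c d x p / (d + p.2) = humbertPsi1Coeff a b c (d + 1) x p / d := by
  have hinv : ((ascPochhammer ℝ p.2).eval d)⁻¹ * (d + p.2)⁻¹ =
      d⁻¹ * ((ascPochhammer ℝ p.2).eval (d + 1))⁻¹ := by
    rw [← mul_inv, ascPochhammer_eval_mul_add_natCast, mul_inv]
  simp only [humbertPsi1Coeff, div_eq_mul_inv, mul_inv]
  linear_combination (ascPochhammer ℝ (p.1 + p.2)).eval a * (ascPochhammer ℝ p.2).eval b *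
    ((ascPochhammer ℝ p.1).eval c)⁻¹ * x ^ p.1 * (p.1 ! : ℝ)⁻¹ * (p.2 ! : ℝ)⁻¹ * hinv

variable {y : ℝ}

theorem summable_humbertPsi1Coeff_mul_pow (hy : |y| < 1) :
    Summable fun p : ℕ × ℕ => humbertPsi1Coeff a b c d x p * y ^ p.2 := by
  -- `(b)_l / (d)_l` grows subexponentially, so enlarging `|y|` to `q < 1` absorbs it.
  obtain ⟨q, hyq, hq⟩ := exists_between hy
  obtain ⟨C, hC⟩ := exists_abs_ascPochhammer_div_mul_pow_le b d (abs_nonneg y) hyq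
  have hmajorant := summable_abs_mul_ascPochhammer_add_mul_pow c x (abs_nonneg a)
    ((abs_nonneg y).trans hyq.le) hq
  refine (hmajorant.mul_left C).of_norm_bounded fun p => ?_
  set u := |x ^ p.1 / ((ascPochhammer ℝ p.1).eval c * (p.1 ! : ℝ))| with hu
  calc
    _ = u * (|(ascPochhammer ℝ (p.1 + p.2)).eval a| / (p.2 ! : ℝ)) *
        (|(ascPochhammer ℝ p.2).eval b / (ascPochhammer ℝ p.2).eval d| * |y| ^ p.2) := by
      simp only [hu, humbertPsi1Coeff, Real.norm_eq_abs, abs_mul, abs_div, abs_pow, Nat.abs_cast]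
      ring
    _ ≤ u * ((ascPochhammer ℝ (p.1 + p.2)).eval |a| / (p.2 ! : ℝ)) * (C * q ^ p.2) := by
      have hpoch := abs_ascPochhammer_eval_le a (p.1 + p.2)
      have hpoch₀ := (abs_nonneg _).trans hpoch
      exact mul_le_mul (by gcongr) (hC p.2) (by positivity) (by positivity)
    _ = _ := by ring

theorem humbertPsi1_eq_tsum_prod (hy : |y| < 1) :
    humbertPsi1 a b c d x y = ∑' p : ℕ × ℕ, humbertPsi1Coeff a b c d x p * y ^ p.2 := by
  rw [(summable_humbertPsi1Coeff_mul_pow a b c d x hy).tsum_prod, humbertPsi1]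
  exact tsum_congr fun j => tsum_congr fun l => (div_mul_eq_mul_div _ _ _).symm

end Humbert

theorem humbertPsi1_eq_rpow_mul_hyp1F1 (a c x : ℝ) {b y : ℝ} (hb : ∀ l : ℕ, b + l ≠ 0)
    (hy : |y| < 1) :
    humbertPsi1 a b c b x y = (1 - y) ^ (-a) * hyp1F1 a c (x / (1 - y)) := by
  rw [humbertPsi1, hyp1F1, ← tsum_mul_left]
  refine tsum_congr fun j => ?_
  have hinner := (hasSum_ascPochhammer_add_div_factorial_mul_pow a j hy).mul_left
    (x ^ j / ((ascPochhammer ℝ j).eval c * (j ! : ℝ)))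
  convert hinner.tsum_eq using 1
  · refine tsum_congr fun l => ?_
    rw [mul_div_mul_right _ _ (ascPochhammer_eval_ne_zero hb l)]
    ring
  · rw [div_pow]
    ring

section Integration

open Set

variable {h Y : ℝ}

theorem hasSum_intervalIntegral_mul_mul_pow {ι : Type*} [Countable ι] {f g : ℝ → ℝ} {κ : ι → ℝ}
    {n : ι → ℕ} (hf : ContinuousOn f (uIcc h Y)) (hg : ContinuousOn g (uIcc h Y))
    (hκ : ∀ y ∈ uIcc h Y, Summable fun i => κ i * g y ^ n i) :
    HasSum (fun i => ∫ y in h..Y, f y * (κ i * g y ^ n i))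
      (∫ y in h..Y, f y * ∑' i, κ i * g y ^ n i) := by
  -- The series at a maximum point `y₀` of `|g|` converges absolutely and dominates all the others.
  obtain ⟨y₀, hy₀, hmax⟩ := isCompact_uIcc.exists_isMaxOn nonempty_uIcc hg.abs
  refine intervalIntegral.hasSum_integral_of_dominated_convergence
    (fun i y => |f y| * |κ i * g y₀ ^ n i|) (fun i => ?_) (fun i => ?_) ?_ ?_ ?_
  · exact ((hf.mul (continuousOn_const.mul (hg.pow _))).mono
      uIoc_subset_uIcc).aestronglyMeasurable measurableSet_uIoc
  · refine .of_forall fun y hy => ?_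
    have hle : |g y| ≤ |g y₀| := hmax (uIoc_subset_uIcc hy)
    rw [norm_mul, norm_mul, norm_pow, abs_mul, abs_pow]
    simp only [Real.norm_eq_abs]
    gcongr
  · exact .of_forall fun y _ => (hκ y₀ hy₀).abs.mul_left _
  · simp_rw [tsum_mul_left]
    exact (hf.abs.mul continuousOn_const).intervalIntegrable
  · exact .of_forall fun y hy => (hκ y (uIoc_subset_uIcc hy)).hasSum.mul_left _

theorem continuousOn_rpow_const_uIcc (hh : 0 < h) (hY : 0 < Y) (s : ℝ) :
    ContinuousOn (fun y : ℝ => y ^ s) (uIcc h Y) :=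
  continuousOn_id.rpow_const fun _ hy => .inl ((lt_min hh hY).trans_le hy.1).ne'

theorem integral_rpow_mul_pow_rpow (hh : 0 < h) (hY : 0 < Y) {s β : ℝ} (w : ℝ) {l : ℕ}
    (hs : s + β * l ≠ 0) :
    ∫ y in h..Y, y ^ (s - 1) * (w * y ^ β) ^ l =
      (Y ^ s * (w * Y ^ β) ^ l - h ^ s * (w * h ^ β) ^ l) / (s + β * l) := by
  have hcombine {y : ℝ} (hy : 0 < y) (t : ℝ) :
      y ^ t * (w * y ^ β) ^ l = w ^ l * y ^ (t + β * l) := by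
    rw [mul_pow, rpow_add hy, rpow_mul_natCast hy.le]
    ring
  have hpos : ∀ y ∈ uIcc h Y, 0 < y := fun y hy => (lt_min hh hY).trans_le hy.1
  rw [intervalIntegral.integral_congr fun y hy => hcombine (hpos y hy) (s - 1),
    intervalIntegral.integral_const_mul,
    integral_rpow (.inr ⟨fun heq => hs (by linarith), fun h0 => (hpos 0 h0).false⟩),
    hcombine hY, hcombine hh, show s - 1 + β * l + 1 = s + β * l by ring]
  ring

theorem integral_rpow_mul_humbertPsi1 (a b c x : ℝ) {d β w : ℝ} (hd : ∀ l : ℕ, d + l ≠ 0)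
    (hβ : β ≠ 0) (hh : 0 < h) (hY : 0 < Y) (hw : ∀ y ∈ uIcc h Y, |w * y ^ β| < 1) :
    ∫ y in h..Y, y ^ (d * β - 1) * humbertPsi1 a b c d x (w * y ^ β) =
      Y ^ (d * β) / (d * β) * humbertPsi1 a b c (d + 1) x (w * Y ^ β) -
        h ^ (d * β) / (d * β) * humbertPsi1 a b c (d + 1) x (w * h ^ β) := by
  have hseries := hasSum_intervalIntegral_mul_mul_pow (g := fun y => w * y ^ β)
    (continuousOn_rpow_const_uIcc hh hY (d * β - 1))
    (continuousOn_const.mul (continuousOn_rpow_const_uIcc hh hY β)) fun y hy =>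
      summable_humbertPsi1Coeff_mul_pow a b c d x (hw y hy)
  have hterm (p : ℕ × ℕ) :
      ∫ y in h..Y, y ^ (d * β - 1) * (humbertPsi1Coeff a b c d x p * (w * y ^ β) ^ p.2) =
        Y ^ (d * β) / (d * β) * (humbertPsi1Coeff a b c (d + 1) x p * (w * Y ^ β) ^ p.2) -
          h ^ (d * β) / (d * β) * (humbertPsi1Coeff a b c (d + 1) x p * (w * h ^ β) ^ p.2) := by
    have hexp : d * β + β * p.2 = (d + p.2) * β := by ring
    simp_rw [mul_left_comm _ (humbertPsi1Coeff a b c d x p)]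
    rw [intervalIntegral.integral_const_mul, integral_rpow_mul_pow_rpow hh hY w
      (by rw [hexp]; exact mul_ne_zero (hd _) hβ), hexp,
      div_mul_eq_div_div _ (d + (p.2 : ℝ)) β]
    linear_combination (Y ^ (d * β) * (w * Y ^ β) ^ p.2 - h ^ (d * β) * (w * h ^ β) ^ p.2) / β *
      humbertPsi1Coeff_div_add_natCast a b c d x p
  have hendpoint {y : ℝ} (hy : y ∈ uIcc h Y) :=
    (summable_humbertPsi1Coeff_mul_pow a b c (d + 1) x (hw y hy)).hasSum.mul_left
      (y ^ (d * β) / (d * β))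
  rw [intervalIntegral.integral_congr fun y hy => congrArg (y ^ (d * β - 1) * ·)
      (humbertPsi1_eq_tsum_prod a b c d x (hw y hy)),
    humbertPsi1_eq_tsum_prod _ _ _ _ _ (hw Y right_mem_uIcc),
    humbertPsi1_eq_tsum_prod _ _ _ _ _ (hw h left_mem_uIcc)]
  simp_rw [hterm] at hseries
  exact hseries.unique ((hendpoint right_mem_uIcc).sub (hendpoint left_mem_uIcc))

theorem abs_mul_rpow_neg_lt_one {α a y : ℝ} (hα : 0 ≤ α) (hh : 0 < h) (hhy : h ≤ y)
    (hsmall : |a| * h ^ (-α) < 1) : |a * y ^ (-α)| < 1 := by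
  rw [abs_mul, abs_of_nonneg (rpow_nonneg (hh.le.trans hhy) _)]
  exact (mul_le_mul_of_nonneg_left (rpow_le_rpow_of_nonpos hh hhy (neg_nonpos.2 hα))
    (abs_nonneg a)).trans_lt hsmall

end Integration

theorem integral_hyp1F1_eq_humbertPsi1_general
    (α k A μ θ a h Y : ℝ) (hα : α ≠ 0) (hk : ∀ l : ℕ, k - 2 / α + l ≠ 0) (hh : 0 < h) (hY : 0 < Y)
    (hsmall : ∀ y ∈ Set.uIcc h Y, |a * y ^ (-α)| < 1)
    (G : ℝ → ℝ)
    (hG : ∀ y : ℝ, G y =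
      (y ^ (2 - k * α) / (2 - k * α)) *
        humbertPsi1 A (k - 2 / α) μ (k - 2 / α + 1) θ (-a * y ^ (-α))) :
    ∫ y in h..Y,
        y ^ (1 - k * α) * (1 + a * y ^ (-α)) ^ (-A) * hyp1F1 A μ (θ / (1 + a * y ^ (-α))) =
      G Y - G h := by
  have hexp : (k - 2 / α) * -α = 2 - k * α := by field_simp; ring
  have hexp' : (k - 2 / α) * -α - 1 = 1 - k * α := by rw [hexp]; ring
  have hw : ∀ y ∈ Set.uIcc h Y, |-a * y ^ (-α)| < 1 := by simpa only [neg_mul, abs_neg] using hsmall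
  have hreduce : ∀ y ∈ Set.uIcc h Y,
      humbertPsi1 A (k - 2 / α) μ (k - 2 / α) θ (-a * y ^ (-α)) =
        (1 + a * y ^ (-α)) ^ (-A) * hyp1F1 A μ (θ / (1 + a * y ^ (-α))) := fun y hy => by
    rw [humbertPsi1_eq_rpow_mul_hyp1F1 A μ θ hk (hw y hy), neg_mul, sub_neg_eq_add]
  rw [hG, hG, ← hexp, ← hexp',
    ← integral_rpow_mul_humbertPsi1 A _ μ θ hk (neg_ne_zero.2 hα) hh hY hw]
  exact intervalIntegral.integral_congr fun y hy => by simp only [hreduce y hy, mul_assoc]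

/-- **Corollary 1** (specialization of Lemma 2 to a receiver at the center of a disk): the
distance integral admits a closed form in terms of the Humbert `Ψ₁` series. -/
theorem integral_hyp1F1_eq_humbertPsi1
    (α k μ θ₂ a h Y : ℝ) (hα : 0 < α) (hk : 2 / α < k) (hθ₂ : 0 ≤ θ₂) (ha : 0 ≤ a)
    (hh : 0 < h) (hhY : h ≤ Y) (hsmall : a * h ^ (-α) < 1)
    (G : ℝ → ℝ)
    (hG : ∀ y : ℝ, G y =
      (y ^ (2 - k * α) / (2 - k * α)) *
        humbertPsi1 (k + μ) (k - 2 / α) μ (k - 2 / α + 1) θ₂ (-a * y ^ (-α))) :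
    ∫ y in h..Y,
        y ^ (1 - k * α) * (1 + a * y ^ (-α)) ^ (-(k + μ)) *
          hyp1F1 (k + μ) μ (θ₂ / (1 + a * y ^ (-α))) = G Y - G h := by
  refine integral_hyp1F1_eq_humbertPsi1_general α k (k + μ) μ θ₂ a h Y hα.ne'
    (fun l => (add_pos_of_pos_of_nonneg (sub_pos.2 hk) l.cast_nonneg).ne') hh (hh.trans_le hhY)
    (fun y hy => abs_mul_rpow_neg_lt_one hα.le hh (Set.uIcc_of_le hhY ▸ hy).1 ?_) G hG
  rwa [abs_of_nonneg ha]
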